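/- For every integer n ≥ 1, the map φ is n-Lipschitz with respect to the L1 norm: ‖φ(p) − φ(q)‖₁ ≤ n·‖p − q‖₁ for all p, q ∈ Σ_n. -/

import Mathlib

/-!
The map `φ` has the layer-cake form
`φ(p)_i = ∫₀¹ 𝟙[p_i ≤ t] / N_p(t) dt`, where `N_p(t) = #{j : p_j ≤ t}`: on the interval
`[p_{π(l)}, p_{π(l-1)})` the count `N_p` is constant equal to `n - l + 1`, and it is `n` above the
maximum of `p` (`phiFormula_eq_integral`, `phi_eq_integral`).  Thus `φ(p)` is an average over `t`
of the uniform distributions on the nonempty sublevel sets `A_t = {j : p_j ≤ t}`.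

For nonempty sets `A`, `B`, the uniform distributions satisfy
`‖𝟙_A/|A| - 𝟙_B/|B|‖₁ ≤ 2 |A ∆ B| / |A| ≤ n |A ∆ B|` when `n ≥ 2`, while `A = B` when `n = 1`
(`uniform_dist_le`).  Integrating over `t` and using `∫₀¹ |𝟙[a ≤ t] - 𝟙[b ≤ t]| dt = |a - b|`
gives the Lipschitz bound.
-/

/-- `Σ_n`: the set of price vectors `p` with `0 ≤ p_i ≤ 1` for all `i` and `p_j = 0` for
some `j`. -/
def SigmaN (n : ℕ) : Set (Fin n → ℝ) :=
  {p | (∀ i, 0 ≤ p i ∧ p i ≤ 1) ∧ ∃ j, p j = 0}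

/-- The values of `p` read in the order given by the permutation `π` (0-based), extended by
`0` beyond index `n`. -/
def seqOf {n : ℕ} (π : Equiv.Perm (Fin n)) (p : Fin n → ℝ) : ℕ → ℝ :=
  fun j => if h : j < n then p (π ⟨j, h⟩) else 0

/-- `Σ_π = {p ∈ Σ_n : p_{π(1)} ≥ p_{π(2)} ≥ ⋯ ≥ p_{π(n)} = 0}`. -/
def SigmaPerm {n : ℕ} (π : Equiv.Perm (Fin n)) : Set (Fin n → ℝ) :=
  {p | p ∈ SigmaN n ∧ (∀ j, j + 1 < n → seqOf π p (j + 1) ≤ seqOf π p j) ∧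
    seqOf π p (n - 1) = 0}

/-- The defining formula for `φ(p)_{π(k)}` on `Σ_π` (with `k` 0-based):
`φ(p)_{π(k)} = (1 - p_{π(1)})/n + ∑_{l=2}^{k} (p_{π(l-1)} - p_{π(l)})/(n - l + 1)`. -/
noncomputable def phiFormula {n : ℕ} (π : Equiv.Perm (Fin n)) (p : Fin n → ℝ) (k : Fin n) : ℝ :=
  (1 - seqOf π p 0) / n +
    ∑ j ∈ Finset.range k.val, (seqOf π p j - seqOf π p (j + 1)) / ((n : ℝ) - j - 1)

open MeasureTheory intervalIntegral

/-- The indicator of `a ≤ t`, as a real-valued function of `t`. -/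
noncomputable def stepInd (a t : ℝ) : ℝ := if a ≤ t then 1 else 0

/-- The number of coordinates of `p` that are at most `t`, as a real number. -/
noncomputable def subCount {n : ℕ} (p : Fin n → ℝ) (t : ℝ) : ℝ := ∑ j, stepInd (p j) t

lemma stepInd_nonneg (a t : ℝ) : 0 ≤ stepInd a t := by
  unfold stepInd; split_ifs <;> norm_num

lemma stepInd_le_one (a t : ℝ) : stepInd a t ≤ 1 := by
  unfold stepInd; split_ifs <;> norm_num

lemma measurable_stepInd (a : ℝ) : Measurable (stepInd a) :=
  Measurable.ite measurableSet_Ici measurable_const measurable_const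

lemma measurable_subCount {n : ℕ} (p : Fin n → ℝ) : Measurable (subCount p) := by
  unfold subCount
  exact Finset.measurable_sum _ fun j _ => measurable_stepInd (p j)

lemma subCount_nonneg {n : ℕ} (p : Fin n → ℝ) (t : ℝ) : 0 ≤ subCount p t :=
  Finset.sum_nonneg fun _ _ => stepInd_nonneg _ _

lemma stepInd_le_subCount {n : ℕ} (p : Fin n → ℝ) (i : Fin n) (t : ℝ) :
    stepInd (p i) t ≤ subCount p t :=
  Finset.single_le_sum (f := fun j => stepInd (p j) t)
    (fun _ _ => stepInd_nonneg _ _) (Finset.mem_univ i)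

lemma one_le_subCount {n : ℕ} {p : Fin n → ℝ} (hp : p ∈ SigmaN n) {t : ℝ} (ht : 0 ≤ t) :
    1 ≤ subCount p t := by
  obtain ⟨j, hj⟩ := hp.2
  have h := stepInd_le_subCount p j t
  simpa [stepInd, hj, ht] using h

lemma intervalIntegrable_of_bdd {f : ℝ → ℝ} (hf : Measurable f) (C : ℝ) (hC : ∀ t, |f t| ≤ C)
    (a b : ℝ) : IntervalIntegrable f volume a b := by
  refine (intervalIntegrable_const (c := C)).mono_fun hf.aestronglyMeasurable ?_
  refine Filter.Eventually.of_forall fun t => ?_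
  have := (hC t).trans (le_abs_self C)
  simpa using this

lemma inv_subCount_bdd {n : ℕ} (p : Fin n → ℝ) (t : ℝ) : |(subCount p t)⁻¹| ≤ 1 := by
  rw [abs_of_nonneg (inv_nonneg.2 (subCount_nonneg p t))]
  by_cases h : ∃ j, p j ≤ t
  · obtain ⟨j, hj⟩ := h
    have h := stepInd_le_subCount p j t
    have h1 : stepInd (p j) t = 1 := by simp [stepInd, hj]
    exact inv_le_one_of_one_le₀ (h1 ▸ h)
  · -- an empty sublevel set gives the junk value `0⁻¹ = 0`
    push Not at h
    have : subCount p t = 0 :=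
      Finset.sum_eq_zero fun j _ => by simp [stepInd, h j]
    simp [this]

lemma intervalIntegrable_inv_subCount {n : ℕ} (p : Fin n → ℝ) (a b : ℝ) :
    IntervalIntegrable (fun t => (subCount p t)⁻¹) volume a b :=
  intervalIntegrable_of_bdd (measurable_subCount p).inv 1 (inv_subCount_bdd p) a b

lemma intervalIntegrable_stepInd_mul {n : ℕ} (p : Fin n → ℝ) (c a b : ℝ) :
    IntervalIntegrable (fun t => stepInd c t * (subCount p t)⁻¹) volume a b := by
  refine intervalIntegrable_of_bdd
    ((measurable_stepInd c).mul (measurable_subCount p).inv) 1 (fun t => ?_) a b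
  rw [Pi.mul_apply, Pi.inv_apply, abs_mul, abs_of_nonneg (stepInd_nonneg c t)]
  exact mul_le_one₀ (stepInd_le_one c t) (abs_nonneg _) (inv_subCount_bdd p t)

lemma intervalIntegrable_stepInd (c a b : ℝ) :
    IntervalIntegrable (stepInd c) volume a b :=
  intervalIntegrable_of_bdd (measurable_stepInd c) 1
    (fun t => by rw [abs_of_nonneg (stepInd_nonneg c t)]; exact stepInd_le_one c t) a b

lemma integral_congr_Ico {f g : ℝ → ℝ} {a b : ℝ} (hab : a ≤ b)
    (h : ∀ t, a ≤ t → t < b → f t = g t) : ∫ t in a..b, f t = ∫ t in a..b, g t := by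
  rw [integral_of_le hab, integral_of_le hab, ← integral_Ico_eq_integral_Ioc,
    ← integral_Ico_eq_integral_Ioc]
  exact setIntegral_congr_fun measurableSet_Ico fun t ht => h t ht.1 ht.2

lemma integral_stepInd_mul {h : ℝ → ℝ} {a : ℝ} (ha0 : 0 ≤ a) (ha1 : a ≤ 1)
    (hh : ∀ x y, IntervalIntegrable (fun t => stepInd a t * h t) volume x y) :
    ∫ t in (0 : ℝ)..1, stepInd a t * h t = ∫ t in a..1, h t := by
  rw [← integral_add_adjacent_intervals (hh 0 a) (hh a 1),
    integral_congr_Ico (g := fun _ => 0) ha0 (fun t _ ht => by simp [stepInd, ht]),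
    integral_congr_Ico (g := h) ha1 (fun t ht _ => by simp [stepInd, ht])]
  simp

lemma integral_stepInd {a : ℝ} (ha0 : 0 ≤ a) (ha1 : a ≤ 1) :
    ∫ t in (0 : ℝ)..1, stepInd a t = 1 - a := by
  have := integral_stepInd_mul (h := fun _ => 1) ha0 ha1
    (fun x y => by simpa using intervalIntegrable_stepInd a x y)
  simpa using this

lemma integral_abs_stepInd_sub {a b : ℝ} (ha0 : 0 ≤ a) (ha1 : a ≤ 1) (hb0 : 0 ≤ b)
    (hb1 : b ≤ 1) : ∫ t in (0 : ℝ)..1, |stepInd a t - stepInd b t| = |a - b| := by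
  wlog hab : a ≤ b generalizing a b
  · simp_rw [abs_sub_comm (stepInd a _), abs_sub_comm a]
    exact this hb0 hb1 ha0 ha1 (le_of_not_ge hab)
  have h : ∀ t, |stepInd a t - stepInd b t| = stepInd a t - stepInd b t := fun t => by
    apply abs_of_nonneg
    unfold stepInd
    split_ifs <;> linarith
  simp_rw [h]
  rw [integral_sub (intervalIntegrable_stepInd _ _ _) (intervalIntegrable_stepInd _ _ _),
    integral_stepInd ha0 ha1, integral_stepInd hb0 hb1, abs_of_nonpos (by linarith)]
  ring

lemma seqOf_fin {n : ℕ} (π : Equiv.Perm (Fin n)) (p : Fin n → ℝ) (m : Fin n) :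
    seqOf π p m = p (π m) := by
  simp [seqOf]

lemma seqOf_antitone {n : ℕ} {π : Equiv.Perm (Fin n)} {p : Fin n → ℝ} (hp : p ∈ SigmaPerm π)
    {a b : ℕ} (hab : a ≤ b) (hb : b < n) : seqOf π p b ≤ seqOf π p a := by
  induction b, hab using Nat.le_induction with
  | base => exact le_rfl
  | succ m _ ih => exact (hp.2.1 m hb).trans (ih (by omega))

/-- If the entries of `p`, read in the order `π`, that are at most `t` are exactly those with
index at least `m` (counting from `0`),
the sublevel count is `n - m`. -/
lemma subCount_eq {n : ℕ} (π : Equiv.Perm (Fin n)) (p : Fin n → ℝ) (m : ℕ) (hm : m ≤ n) (t : ℝ)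
    (h : ∀ k : Fin n, seqOf π p k ≤ t ↔ m ≤ k) : subCount p t = (n : ℝ) - m := by
  unfold subCount
  rw [← Equiv.sum_comp π]
  have h1 : ∀ k : Fin n, stepInd (p (π k)) t = (fun j : ℕ => if m ≤ j then (1 : ℝ) else 0) k := by
    intro k
    simp only [stepInd, ← seqOf_fin, h]
  rw [Finset.sum_congr rfl fun k _ => h1 k,
    Fin.sum_univ_eq_sum_range (fun j : ℕ => if m ≤ j then (1 : ℝ) else 0) n, Finset.sum_boole]
  have : (Finset.range n).filter (fun j => m ≤ j) = Finset.Ico m n := by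
    ext j; simp [and_comm]
  rw [this, Nat.card_Ico, Nat.cast_sub hm]

/-- The defining sum of `φ` is the integral of `1 / N_p`, cut at the sorted values of `p`. -/
lemma phiFormula_eq_integral {n : ℕ} {π : Equiv.Perm (Fin n)} {p : Fin n → ℝ}
    (hp : p ∈ SigmaPerm π) (k : ℕ) (hk : k < n) :
    phiFormula π p ⟨k, hk⟩ = ∫ t in (seqOf π p k)..1, (subCount p t)⁻¹ := by
  induction k with
  | zero =>
    have h1 : seqOf π p 0 ≤ 1 := by
      have := (hp.1.1 (π ⟨0, hk⟩)).2
      rwa [← seqOf_fin π p] at this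
    rw [integral_congr_Ico (g := fun _ => ((n : ℝ))⁻¹) h1]
    · simp [phiFormula, div_eq_mul_inv]
    · intro t ht _
      rw [subCount_eq π p 0 (Nat.zero_le _) t fun m => ?_]
      · simp
      · simpa using (seqOf_antitone hp (Nat.zero_le _) m.2).trans ht
  | succ k ih =>
    have hk' : k < n := by omega
    rw [← integral_add_adjacent_intervals
      (intervalIntegrable_inv_subCount p (seqOf π p (k + 1)) (seqOf π p k))
      (intervalIntegrable_inv_subCount p _ 1), ← ih hk',
      integral_congr_Ico (g := fun _ => ((n : ℝ) - k - 1)⁻¹) (hp.2.1 k hk)]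
    · simp only [phiFormula, Finset.sum_range_succ, intervalIntegral.integral_const, smul_eq_mul,
        div_eq_mul_inv]
      ring
    · intro t ht ht'
      rw [subCount_eq π p (k + 1) hk.le t fun m => ?_]
      · push_cast; ring
      · constructor
        · intro h
          by_contra hlt
          have := seqOf_antitone hp (show (m : ℕ) ≤ k by omega) hk'
          linarith
        · intro h
          exact (seqOf_antitone hp h m.2).trans ht

lemma exists_mem_sigmaPerm {n : ℕ} {p : Fin n → ℝ} (hp : p ∈ SigmaN n) :
    ∃ π : Equiv.Perm (Fin n), p ∈ SigmaPerm π := by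
  obtain ⟨j, hj⟩ := hp.2
  have hn : 0 < n := j.pos
  have hmono := Tuple.monotone_sort (fun i => -p i)
  set π := Tuple.sort (fun i => -p i)
  refine ⟨π, hp, fun m hm => ?_, ?_⟩
  · have := hmono (show (⟨m, by omega⟩ : Fin n) ≤ ⟨m + 1, hm⟩ by simp)
    have hm' : m < n := by omega
    simp only [seqOf, hm, hm', dite_true]
    simpa using this
  · have hl : n - 1 < n := by omega
    have := hmono (show π.symm j ≤ (⟨n - 1, hl⟩ : Fin n) from by
      rw [Fin.le_def]; have := (π.symm j).2; simp only; omega)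
    simp only [Function.comp, Equiv.apply_symm_apply, hj] at this
    simp only [seqOf, hl, dite_true]
    linarith [(hp.1 (π ⟨n - 1, hl⟩)).1]

lemma phi_eq_integral {n : ℕ} (φ : (Fin n → ℝ) → (Fin n → ℝ))
    (hφ : ∀ π : Equiv.Perm (Fin n), ∀ p ∈ SigmaPerm π, ∀ k : Fin n,
      φ p (π k) = phiFormula π p k) {p : Fin n → ℝ} (hp : p ∈ SigmaN n) (i : Fin n) :
    φ p i = ∫ t in (0 : ℝ)..1, stepInd (p i) t * (subCount p t)⁻¹ := by
  obtain ⟨π, hπ⟩ := exists_mem_sigmaPerm hp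
  rw [integral_stepInd_mul (hp.1 i).1 (hp.1 i).2
    (fun x y => intervalIntegrable_stepInd_mul p (p i) x y)]
  have h := hφ π p hπ (π.symm i)
  have h2 := phiFormula_eq_integral hπ (π.symm i) (π.symm i).2
  rw [seqOf_fin] at h2
  simp only [Equiv.apply_symm_apply, Fin.eta] at h h2
  rw [h, h2]

/-- The `L¹` distance between the uniform distributions on the sublevel sets of `p` and `q` at
height `t` is at most `n` times the size of their symmetric difference. -/
lemma uniform_dist_le {n : ℕ} {p q : Fin n → ℝ} (hp : p ∈ SigmaN n)
    (hq : q ∈ SigmaN n) {t : ℝ} (ht : 0 ≤ t) :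
    ∑ i, |stepInd (p i) t * (subCount p t)⁻¹ - stepInd (q i) t * (subCount q t)⁻¹| ≤
      n * ∑ i, |stepInd (p i) t - stepInd (q i) t| := by
  have ha := one_le_subCount hp ht
  have hb := one_le_subCount hq ht
  set D := ∑ i, |stepInd (p i) t - stepInd (q i) t| with hD
  have hD0 : 0 ≤ D := Finset.sum_nonneg fun _ _ => abs_nonneg _
  obtain ⟨j, hj⟩ := hp.2
  obtain ⟨l, hl⟩ := hq.2
  by_cases hn : n ≤ 1
  · -- for `n = 1` the only element of `Σ_n` is `0`
    have hpq : p = q := by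
      ext i
      have h1 : i = j := Fin.ext (by omega)
      have h2 : i = l := Fin.ext (by omega)
      rw [h1, hj, ← h1, h2, hl]
    subst hpq
    simp [D]
  have hn2 : (2 : ℝ) ≤ n := by exact_mod_cast (by omega : 2 ≤ n)
  set a := subCount p t with haN
  set b := subCount q t with hbN
  have hab : |b - a| ≤ D := by
    rw [abs_sub_comm, haN, hbN, subCount, subCount, ← Finset.sum_sub_distrib]
    exact Finset.abs_sum_le_sum_abs _ _
  have ha0 : 0 < a := by linarith
  have hb0 : 0 < b := by linarith
  -- pass from `𝟙_A/|A|` to `𝟙_B/|B|` through `𝟙_B/|A|`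
  have key : ∀ i, |stepInd (p i) t * a⁻¹ - stepInd (q i) t * b⁻¹| ≤
      |stepInd (p i) t - stepInd (q i) t| * a⁻¹ + stepInd (q i) t * (|b - a| * (a⁻¹ * b⁻¹)) := by
    intro i
    have e : stepInd (p i) t * a⁻¹ - stepInd (q i) t * b⁻¹ =
        (stepInd (p i) t - stepInd (q i) t) * a⁻¹
          + stepInd (q i) t * ((b - a) * (a⁻¹ * b⁻¹)) := by
      field_simp; ring
    rw [e]
    refine (abs_add_le _ _).trans (le_of_eq ?_)
    simp only [abs_mul, abs_inv, abs_of_pos ha0, abs_of_pos hb0,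
      abs_of_nonneg (stepInd_nonneg _ _)]
  calc _ ≤ ∑ i, (|stepInd (p i) t - stepInd (q i) t| * a⁻¹
          + stepInd (q i) t * (|b - a| * (a⁻¹ * b⁻¹))) := Finset.sum_le_sum fun i _ => key i
    _ = D * a⁻¹ + b * (|b - a| * (a⁻¹ * b⁻¹)) := by
        rw [Finset.sum_add_distrib, ← Finset.sum_mul, ← Finset.sum_mul]
        rfl
    _ = (D + |b - a|) * a⁻¹ := by field_simp
    _ ≤ (D + |b - a|) * 1 := by
        gcongr
        exact inv_le_one_of_one_le₀ ha
    _ ≤ n * D := by nlinarith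

/-- The map `φ` is `n`-Lipschitz with respect to the `L¹` norm:
`‖φ(p) − φ(q)‖₁ ≤ n·‖p − q‖₁` for all `p, q ∈ Σ_n`. -/
theorem phi_lipschitz (n : ℕ) (hn : 1 ≤ n) (φ : (Fin n → ℝ) → (Fin n → ℝ))
    (hφ : ∀ π : Equiv.Perm (Fin n), ∀ p ∈ SigmaPerm π, ∀ k : Fin n,
      φ p (π k) = phiFormula π p k) :
    ∀ p ∈ SigmaN n, ∀ q ∈ SigmaN n,
      ∑ i : Fin n, |φ p i - φ q i| ≤ (n : ℝ) * ∑ i : Fin n, |p i - q i| := by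
  intro p hp q hq
  have hF : ∀ i, IntervalIntegrable (fun t => stepInd (p i) t * (subCount p t)⁻¹
      - stepInd (q i) t * (subCount q t)⁻¹) volume 0 1 := fun i =>
    (intervalIntegrable_stepInd_mul p (p i) 0 1).sub (intervalIntegrable_stepInd_mul q (q i) 0 1)
  have hG : ∀ i, IntervalIntegrable (fun t => |stepInd (p i) t - stepInd (q i) t|) volume 0 1 :=
    fun i => ((intervalIntegrable_stepInd (p i) 0 1).sub (intervalIntegrable_stepInd (q i) 0 1)).abs
  calc ∑ i, |φ p i - φ q i|
      ≤ ∑ i, ∫ t in (0 : ℝ)..1, |stepInd (p i) t * (subCount p t)⁻¹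
          - stepInd (q i) t * (subCount q t)⁻¹| := by
        refine Finset.sum_le_sum fun i _ => ?_
        rw [phi_eq_integral φ hφ hp, phi_eq_integral φ hφ hq,
          ← integral_sub (intervalIntegrable_stepInd_mul p (p i) 0 1)
            (intervalIntegrable_stepInd_mul q (q i) 0 1)]
        exact abs_integral_le_integral_abs zero_le_one
    _ = ∫ t in (0 : ℝ)..1, ∑ i, |stepInd (p i) t * (subCount p t)⁻¹
          - stepInd (q i) t * (subCount q t)⁻¹| :=
        (integral_finsetSum fun i _ => (hF i).abs).symm
    _ ≤ ∫ t in (0 : ℝ)..1, n * ∑ i, |stepInd (p i) t - stepInd (q i) t| := by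
        refine integral_mono_on zero_le_one ?_ ?_ fun t ht => uniform_dist_le hp hq ht.1
        · simpa [Finset.sum_fn] using IntervalIntegrable.sum Finset.univ fun i _ => (hF i).abs
        · refine IntervalIntegrable.const_mul ?_ _
          simpa [Finset.sum_fn] using IntervalIntegrable.sum Finset.univ fun i _ => hG i
    _ = n * ∑ i, |p i - q i| := by
        rw [intervalIntegral.integral_const_mul, integral_finsetSum fun i _ => hG i]
        congr 1
        exact Finset.sum_congr rfl fun i _ =>
          integral_abs_stepInd_sub (hp.1 i).1 (hp.1 i).2 (hq.1 i).1 (hq.1 i).2
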